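/- arXiv:2603.17660 — 4 statements merged into one kernel-verified Lean document; each statement's English description precedes it below -/
import Mathlib

section
/- For every integer t ≥ 3, the ideals I_{2^t+1,4} and I_{2^t,4} of F_2[w_2,w_3,w_4] are equal; equivalently, I_{2^t+1,4} = (g_{2^t-2}, g_{2^t-1}, g_{2^t}). -/
open MvPolynomial

/-- The polynomials `g_r = g_r^{(4)}` in `F_2[w_2,w_3,w_4]` (variables `X 0 = w_2`,
`X 1 = w_3`, `X 2 = w_4`): `g_0 = 1`, `g_r = 0` for `r < 0`, and
`g_r = w_2·g_{r-2} + w_3·g_{r-3} + w_4·g_{r-4}` for `r ≥ 1`. -/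
noncomputable def g4 : ℤ → MvPolynomial (Fin 3) (ZMod 2)
  | r =>
    if r ≤ 0 then (if r = 0 then 1 else 0)
    else X 0 * g4 (r - 2) + X 1 * g4 (r - 3) + X 2 * g4 (r - 4)
  termination_by r => r.toNat
  decreasing_by all_goals omega

/-- The ideal `I_{n,4} = (g_{n-3}, g_{n-2}, g_{n-1}, g_n)` of `F_2[w_2,w_3,w_4]`. -/
noncomputable def I4 (n : ℤ) : Ideal (MvPolynomial (Fin 3) (ZMod 2)) :=
  Ideal.span {g4 (n - 3), g4 (n - 2), g4 (n - 1), g4 n}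

lemma g4_frob (i : ℕ) : ∀ r : ℤ, 4 * 2 ^ i - 3 ≤ r →
    g4 r = X 0 ^ (2 ^ i) * g4 (r - 2 * 2 ^ i) + X 1 ^ (2 ^ i) * g4 (r - 3 * 2 ^ i)
      + X 2 ^ (2 ^ i) * g4 (r - 4 * 2 ^ i) := by
  induction i with
  | zero =>
    intro r hr
    rw [g4, if_neg (by norm_num at hr; omega)]
    norm_num
  | succ i ih =>
    intro r hr
    have e : (2 : ℤ) ^ (i + 1) = 2 * 2 ^ i := by ring
    have e' : 2 ^ (i + 1) = 2 ^ i * 2 := by ring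
    have hp : (0 : ℤ) < 2 ^ i := by positivity
    rw [e] at hr ⊢
    simp only [e', pow_mul]
    generalize hq : (2 : ℤ) ^ i = q at *
    rw [ih r (by omega), ih (r - 2 * q) (by omega), ih (r - 3 * q) (by omega),
      ih (r - 4 * q) (by omega)]
    rw [show r - 2 * q - 2 * q = r - 4 * q by ring, show r - 2 * q - 3 * q = r - 5 * q by ring,
      show r - 2 * q - 4 * q = r - 6 * q by ring, show r - 3 * q - 2 * q = r - 5 * q by ring,
      show r - 3 * q - 3 * q = r - 6 * q by ring, show r - 3 * q - 4 * q = r - 7 * q by ring,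
      show r - 4 * q - 2 * q = r - 6 * q by ring, show r - 4 * q - 3 * q = r - 7 * q by ring,
      show r - 4 * q - 4 * q = r - 8 * q by ring, show r - 2 * (2 * q) = r - 4 * q by ring,
      show r - 3 * (2 * q) = r - 6 * q by ring, show r - 4 * (2 * q) = r - 8 * q by ring]
    rw [ih (r - 4 * q) (by omega), show r - 4 * q - 2 * q = r - 6 * q by ring,
      show r - 4 * q - 3 * q = r - 7 * q by ring, show r - 4 * q - 4 * q = r - 8 * q by ring]
    have h2 : (2 : MvPolynomial (Fin 3) (ZMod 2)) = 0 := CharTwo.two_eq_zero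
    generalize (X 0 : MvPolynomial (Fin 3) (ZMod 2)) ^ (2 ^ i) = a
    generalize (X 1 : MvPolynomial (Fin 3) (ZMod 2)) ^ (2 ^ i) = b
    generalize (X 2 : MvPolynomial (Fin 3) (ZMod 2)) ^ (2 ^ i) = c
    linear_combination (a * b * g4 (r - 5 * q) + a * c * g4 (r - 6 * q)
      + b * c * g4 (r - 7 * q)) * h2

lemma g4_neg (r : ℤ) (h : r < 0) : g4 r = 0 := by
  rw [g4, if_pos h.le, if_neg h.ne]

lemma g4_zero (t : ℕ) : g4 (2 ^ t - 3) = 0 ∧ g4 (2 ^ (t + 1) - 3) = 0 := by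
  induction t with
  | zero => exact ⟨g4_neg _ (by norm_num), g4_neg _ (by norm_num)⟩
  | succ t ih =>
    refine ⟨ih.2, ?_⟩
    rw [g4_frob t _ (by rw [pow_succ, pow_succ]; linarith),
      show (2 : ℤ) ^ (t + 1 + 1) - 3 - 2 * 2 ^ t = 2 ^ (t + 1) - 3 by ring,
      show (2 : ℤ) ^ (t + 1 + 1) - 3 - 3 * 2 ^ t = 2 ^ t - 3 by ring,
      show (2 : ℤ) ^ (t + 1 + 1) - 3 - 4 * 2 ^ t = -3 by ring, ih.1, ih.2,
      g4_neg (-3) (by norm_num)]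
    simp

/-- For every integer `t ≥ 3`, the ideals `I_{2^t+1,4}` and `I_{2^t,4}` are equal;
equivalently, `I_{2^t+1,4} = (g_{2^t-2}, g_{2^t-1}, g_{2^t})`. -/
theorem stmt0 (t : ℕ) (ht : 3 ≤ t) :
    I4 (2 ^ t + 1) = I4 (2 ^ t) ∧
      I4 (2 ^ t + 1) =
        Ideal.span {g4 (2 ^ t - 2), g4 (2 ^ t - 1), g4 (2 ^ t)} := by
  have h0 := (g4_zero t).1
  have hp : (0 : ℤ) < 2 ^ t := by positivity
  have h1 : g4 (2 ^ t + 1) = X 0 * g4 (2 ^ t - 1) + X 1 * g4 (2 ^ t - 2) := by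
    rw [g4, if_neg (by omega), show (2 : ℤ) ^ t + 1 - 2 = 2 ^ t - 1 by ring,
      show (2 : ℤ) ^ t + 1 - 3 = 2 ^ t - 2 by ring,
      show (2 : ℤ) ^ t + 1 - 4 = 2 ^ t - 3 by ring, h0]
    simp
  have hA : I4 (2 ^ t) = Ideal.span {g4 (2 ^ t - 2), g4 (2 ^ t - 1), g4 (2 ^ t)} := by
    rw [I4, h0, Ideal.span_insert_zero]
  have hB : I4 (2 ^ t + 1) = Ideal.span {g4 (2 ^ t - 2), g4 (2 ^ t - 1), g4 (2 ^ t)} := by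
    rw [I4, show (2 : ℤ) ^ t + 1 - 2 = 2 ^ t - 1 by ring,
      show (2 : ℤ) ^ t + 1 - 3 = 2 ^ t - 2 by ring,
      show (2 : ℤ) ^ t + 1 - 1 = 2 ^ t by ring]
    apply le_antisymm
    · rw [Ideal.span_le]
      rintro x (rfl | rfl | rfl | rfl)
      · exact Ideal.subset_span (by simp)
      · exact Ideal.subset_span (by simp)
      · exact Ideal.subset_span (by simp)
      · rw [h1]
        exact Ideal.add_mem _ (Ideal.mul_mem_left _ _ (Ideal.subset_span (by simp)))
          (Ideal.mul_mem_left _ _ (Ideal.subset_span (by simp)))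
    · apply Ideal.span_mono
      rintro x (rfl | rfl | rfl) <;> simp
  exact ⟨hB.trans hA.symm, hB⟩
end

section
/- For every integer t ≥ 3, the ideals I_{2^t,3} and I_{2^t-1,3} of F_2[w_2,w_3] are equal; equivalently, I_{2^t,3} = (g^{(3)}_{2^t-2}, g^{(3)}_{2^t-1}). -/
open MvPolynomial
/-- The polynomials `g_r^{(3)}` in `F_2[w_2,w_3]` (variables `X 0 = w_2`, `X 1 = w_3`):
`g^{(3)}_0 = 1`, `g^{(3)}_r = 0` for `r < 0`, and
`g^{(3)}_r = w_2·g^{(3)}_{r-2} + w_3·g^{(3)}_{r-3}` for `r ≥ 1`. -/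
noncomputable def g3 : ℤ → MvPolynomial (Fin 2) (ZMod 2)
  | r =>
    if r ≤ 0 then (if r = 0 then 1 else 0)
    else X 0 * g3 (r - 2) + X 1 * g3 (r - 3)
  termination_by r => r.toNat
  decreasing_by all_goals omega

/-- The ideal `I_{n,3} = (g^{(3)}_{n-2}, g^{(3)}_{n-1}, g^{(3)}_n)` of `F_2[w_2,w_3]`. -/
noncomputable def I3 (n : ℤ) : Ideal (MvPolynomial (Fin 2) (ZMod 2)) :=
  Ideal.span {g3 (n - 2), g3 (n - 1), g3 n}


theorem g3_rec (r : ℤ) (h : 1 ≤ r) : g3 r = X 0 * g3 (r - 2) + X 1 * g3 (r - 3) := by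
  rw [g3, if_neg (by omega)]

theorem g3_neg (r : ℤ) (h : r < 0) : g3 r = 0 := by
  rw [g3, if_pos (by omega), if_neg (by omega)]

theorem g3_frob (k : ℕ) : ∀ r : ℤ, 3 * 2 ^ k - 2 ≤ r →
    g3 r = X 0 ^ (2 ^ k) * g3 (r - 2 * 2 ^ k) + X 1 ^ (2 ^ k) * g3 (r - 3 * 2 ^ k) := by
  induction k with
  | zero => intro r h; simpa using g3_rec r (by simpa using h)
  | succ k ih =>
    intro r h
    have hm : (1 : ℤ) ≤ 2 ^ k := one_le_pow₀ (by norm_num)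
    have e : (2 : ℤ) ^ (k + 1) = 2 * 2 ^ k := by ring
    rw [e] at h ⊢
    rw [ih r (by linarith), ih (r - 2 * 2 ^ k) (by linarith), ih (r - 3 * 2 ^ k) (by linarith)]
    have e1 : r - 2 * 2 ^ k - 2 * 2 ^ k = r - 2 * (2 * (2 : ℤ) ^ k) := by ring
    have e2 : r - 3 * 2 ^ k - 2 * 2 ^ k = r - 2 * 2 ^ k - 3 * (2 : ℤ) ^ k := by ring
    have e3 : r - 3 * 2 ^ k - 3 * 2 ^ k = r - 3 * (2 * (2 : ℤ) ^ k) := by ring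
    rw [e1, e2, e3, pow_succ 2 k, pow_mul, pow_mul]
    have c := CharTwo.add_self_eq_zero
      ((X 0 ^ (2 ^ k) * X 1 ^ (2 ^ k) * g3 (r - 2 * 2 ^ k - 3 * (2 : ℤ) ^ k) :
        MvPolynomial (Fin 2) (ZMod 2)))
    linear_combination c

theorem g3_zero (t : ℕ) : g3 (2 ^ t - 3) = 0 ∧ g3 (2 ^ (t + 1) - 3) = 0 := by
  induction t with
  | zero => exact ⟨g3_neg _ (by norm_num), g3_neg _ (by norm_num)⟩
  | succ t ih =>
    refine ⟨ih.2, ?_⟩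
    have hm : (1 : ℤ) ≤ 2 ^ t := one_le_pow₀ (by norm_num)
    have e : (2 : ℤ) ^ (t + 1 + 1) = 4 * 2 ^ t := by ring
    rw [e, g3_frob t _ (by linarith)]
    have e1 : 4 * 2 ^ t - 3 - 2 * 2 ^ t = (2 : ℤ) ^ (t + 1) - 3 := by ring
    have e2 : 4 * 2 ^ t - 3 - 3 * 2 ^ t = (2 : ℤ) ^ t - 3 := by ring
    rw [e1, e2, ih.1, ih.2]; simp

/-- For every integer `t ≥ 3`, the ideals `I_{2^t,3}` and `I_{2^t-1,3}` are equal;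
equivalently, `I_{2^t,3} = (g^{(3)}_{2^t-2}, g^{(3)}_{2^t-1})`. -/
theorem stmt1 (t : ℕ) (ht : 3 ≤ t) :
    I3 (2 ^ t) = I3 (2 ^ t - 1) ∧
      I3 (2 ^ t) = Ideal.span {g3 (2 ^ t - 2), g3 (2 ^ t - 1)} := by
  have hz := (g3_zero t).1
  have hm : (1 : ℤ) ≤ 2 ^ t := one_le_pow₀ (by norm_num)
  have hr := g3_rec (2 ^ t) hm
  rw [hz, mul_zero, add_zero] at hr
  have h2 : I3 (2 ^ t) = Ideal.span {g3 (2 ^ t - 2), g3 (2 ^ t - 1)} := by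
    unfold I3
    apply le_antisymm
    · rw [Ideal.span_le]
      rintro x (rfl | rfl | rfl)
      · exact Ideal.subset_span (by simp)
      · exact Ideal.subset_span (by simp)
      · rw [hr]
        exact Ideal.mul_mem_left _ _ (Ideal.subset_span (by simp))
    · apply Ideal.span_mono
      rintro x (rfl | rfl) <;> simp
  refine ⟨?_, h2⟩
  rw [h2]
  unfold I3
  have e1 : (2 : ℤ) ^ t - 1 - 2 = 2 ^ t - 3 := by ring
  have e2 : (2 : ℤ) ^ t - 1 - 1 = 2 ^ t - 2 := by ring
  rw [e1, e2, hz, Ideal.span_insert_zero]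
end

section
/- For every integer t ≥ 3, the identity w_4^{2^{t-1}-1} = g_{2^{t+1}-4} + w_2^{2^{t-1}}·g_{2^t-4} + w_3^{2^{t-1}}·g_{2^{t-1}-4} holds in the polynomial ring F_2[w_2,w_3,w_4]. -/
open MvPolynomial

lemma g4_zero_s7 : g4 0 = 1 := by
  rw [g4]; simp

lemma g4_pos (r : ℤ) (h : 0 < r) :
    g4 r = X 0 * g4 (r - 2) + X 1 * g4 (r - 3) + X 2 * g4 (r - 4) := by
  rw [g4, if_neg (not_le.mpr h)]

/-- coefficients of `P^q * G` -/
noncomputable def D4 (q : ℕ) (r : ℤ) : MvPolynomial (Fin 3) (ZMod 2) :=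
  g4 r + X 0 ^ q * g4 (r - 2 * q) + X 1 ^ q * g4 (r - 3 * q) + X 2 ^ q * g4 (r - 4 * q)

lemma two_eq_zero4 : (2 : MvPolynomial (Fin 3) (ZMod 2)) = 0 := CharTwo.two_eq_zero

lemma D4_double (q : ℕ) (r : ℤ) :
    D4 (2 * q) r = D4 q r + X 0 ^ q * D4 q (r - 2 * q) + X 1 ^ q * D4 q (r - 3 * q)
      + X 2 ^ q * D4 q (r - 4 * q) := by
  unfold D4
  push_cast
  have e1 : r - 2 * (2 * (q : ℤ)) = r - 4 * q := by ring
  have e2 : r - 3 * (2 * (q : ℤ)) = r - 6 * q := by ring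
  have e3 : r - 4 * (2 * (q : ℤ)) = r - 8 * q := by ring
  have a1 : r - 2 * (q : ℤ) - 2 * q = r - 4 * q := by ring
  have a2 : r - 2 * (q : ℤ) - 3 * q = r - 5 * q := by ring
  have a3 : r - 2 * (q : ℤ) - 4 * q = r - 6 * q := by ring
  have b1 : r - 3 * (q : ℤ) - 2 * q = r - 5 * q := by ring
  have b2 : r - 3 * (q : ℤ) - 3 * q = r - 6 * q := by ring
  have b3 : r - 3 * (q : ℤ) - 4 * q = r - 7 * q := by ring
  have c1 : r - 4 * (q : ℤ) - 2 * q = r - 6 * q := by ring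
  have c2 : r - 4 * (q : ℤ) - 3 * q = r - 7 * q := by ring
  have c3 : r - 4 * (q : ℤ) - 4 * q = r - 8 * q := by ring
  rw [e1, e2, e3, a1, a2, a3, b1, b2, b3, c1, c2, c3]
  linear_combination (-(X 0 ^ q * g4 (r - 2 * q) + X 1 ^ q * g4 (r - 3 * q)
    + X 2 ^ q * g4 (r - 4 * q) + X 0 ^ q * X 1 ^ q * g4 (r - 5 * q)
    + X 0 ^ q * X 2 ^ q * g4 (r - 6 * q) + X 1 ^ q * X 2 ^ q * g4 (r - 7 * q))) * two_eq_zero4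

lemma D4_main (s : ℕ) :
    (∀ r : ℤ, 4 * 2 ^ s - 4 < r → D4 (2 ^ s) r = 0) ∧
      D4 (2 ^ s) (4 * 2 ^ s - 4) = X 2 ^ (2 ^ s - 1) := by
  induction s with
  | zero =>
    constructor
    · intro r hr
      have hr' : 0 < r := by simpa using hr
      simp only [D4, pow_zero, pow_one, Nat.cast_one, mul_one]
      rw [g4_pos r hr']
      linear_combination (X 0 * g4 (r - 2) + X 1 * g4 (r - 3) + X 2 * g4 (r - 4)) * two_eq_zero4
    · simp [D4, g4_zero_s7, g4_neg]
  | succ s ih =>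
    obtain ⟨h0, h1⟩ := ih
    have hq : (1 : ℤ) ≤ 2 ^ s := one_le_pow₀ (by norm_num)
    have hqn : 1 ≤ 2 ^ s := Nat.one_le_two_pow
    rw [pow_succ' (2 : ℕ), pow_succ' (2 : ℤ)]
    constructor
    · intro r hr
      rw [D4_double]
      push_cast
      rw [h0 r (by linarith), h0 (r - 2 * 2 ^ s) (by linarith), h0 (r - 3 * 2 ^ s) (by linarith),
        h0 (r - 4 * 2 ^ s) (by linarith)]
      simp
    · rw [D4_double]
      push_cast
      rw [h0 _ (by linarith), h0 (_ - 2 * 2 ^ s) (by linarith), h0 (_ - 3 * 2 ^ s) (by linarith),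
        show (4 * (2 * 2 ^ s) - 4 - 4 * 2 ^ s : ℤ) = 4 * 2 ^ s - 4 by ring, h1, mul_zero, mul_zero,
        zero_add, zero_add, zero_add, ← pow_add]
      congr 1
      omega

/-- Lemma 3.4: for every `t ≥ 3`,
`w_4^{2^{t-1}-1} = g_{2^{t+1}-4} + w_2^{2^{t-1}} g_{2^t-4} + w_3^{2^{t-1}} g_{2^{t-1}-4}`
in `F_2[w_2,w_3,w_4]`. -/
theorem stmt7 (t : ℕ) (ht : 3 ≤ t) :
    (X 2 : MvPolynomial (Fin 3) (ZMod 2)) ^ (2 ^ (t - 1) - 1) =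
      g4 (2 ^ (t + 1) - 4) + X 0 ^ 2 ^ (t - 1) * g4 (2 ^ t - 4)
        + X 1 ^ 2 ^ (t - 1) * g4 (2 ^ (t - 1) - 4) := by
  obtain ⟨s, rfl⟩ : ∃ s, t = s + 1 := ⟨t - 1, by omega⟩
  have h := (D4_main s).2
  simp only [Nat.add_sub_cancel]
  rw [← h, D4]
  push_cast
  rw [g4_neg (4 * 2 ^ s - 4 - 4 * 2 ^ s) (by linarith),
    show (4 * 2 ^ s - 4 - 2 * 2 ^ s : ℤ) = 2 ^ (s + 1) - 4 by ring,
    show (4 * 2 ^ s - 4 - 3 * 2 ^ s : ℤ) = 2 ^ s - 4 by ring,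
    show (4 * 2 ^ s - 4 : ℤ) = 2 ^ (s + 1 + 1) - 4 by ring]
  simp
end

section
/- For every integer t ≥ 3: w_4^{2^{t-1}} ∈ I_{2^t,4} and w_4^{2^{t-1}-1} ∉ I_{2^t,4}; that is, the image of w_4 in F_2[w_2,w_3,w_4]/I_{2^t,4} has height exactly 2^{t-1}-1. (This expresses that the height of the Stiefel–Whitney class w̃_4 in H^*(G̃_{n,4}; F_2) equals 2^{t-1}-1 for n ∈ {2^t, 2^t+1}, since I_{2^t+1,4} = I_{2^t,4}.) -/
open MvPolynomial

namespace Stmt8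

abbrev R := MvPolynomial (Fin 3) (ZMod 2)

theorem two_zero : (2 : R) = 0 := CharTwo.two_eq_zero

theorem g4_neg {r : ℤ} (h : r < 0) : g4 r = 0 := by
  rw [g4, if_pos h.le, if_neg h.ne]

theorem g4_zero : g4 0 = 1 := by
  rw [g4]; simp

theorem g4_pos {r : ℤ} (h : 0 < r) :
    g4 r = X 0 * g4 (r - 2) + X 1 * g4 (r - 3) + X 2 * g4 (r - 4) := by
  rw [g4, if_neg (not_le.mpr h)]

theorem g4_dbl (N : ℕ) : ∀ n : ℤ, n < N →
    g4 (2 * n) = g4 n ^ 2 + X 0 * g4 (n - 1) ^ 2 + X 2 * g4 (n - 2) ^ 2 ∧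
    g4 (2 * n + 1) = X 1 * g4 (n - 1) ^ 2 := by
  induction N with
  | zero =>
    intro n hn
    have hn : n < 0 := by simpa using hn
    rw [g4_neg (show 2 * n < 0 by omega), g4_neg (show 2 * n + 1 < 0 by omega), g4_neg hn,
      g4_neg (show n - 1 < 0 by omega), g4_neg (show n - 2 < 0 by omega)]
    simp
  | succ N ih =>
    intro n hn
    push_cast at hn
    have e1 := ih (n - 1) (by omega)
    have e2 := ih (n - 2) (by omega)
    have h2 := two_zero
    rw [show 2 * (n - 1) = 2 * n - 2 by ring, show 2 * n - 2 + 1 = 2 * n - 1 by ring,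
      show n - 1 - 1 = n - 2 by ring, show n - 1 - 2 = n - 3 by ring] at e1
    rw [show 2 * (n - 2) = 2 * n - 4 by ring, show 2 * n - 4 + 1 = 2 * n - 3 by ring,
      show n - 2 - 1 = n - 3 by ring, show n - 2 - 2 = n - 4 by ring] at e2
    have hA : g4 (2 * n) = g4 n ^ 2 + X 0 * g4 (n - 1) ^ 2 + X 2 * g4 (n - 2) ^ 2 := by
      rcases lt_trichotomy n 0 with h | h | h
      · rw [g4_neg (show 2 * n < 0 by omega), g4_neg h,
          g4_neg (show n - 1 < 0 by omega), g4_neg (show n - 2 < 0 by omega)]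
        simp
      · subst h
        simp [g4_zero, g4_neg]
      · rw [g4_pos (show 0 < 2 * n by omega), g4_pos h, e1.1, e2.1, e2.2]
        linear_combination (X 0 * X 2 * g4 (n - 3) ^ 2
          - X 0 * g4 (n - 2) * X 1 * g4 (n - 3) - X 0 * g4 (n - 2) * X 2 * g4 (n - 4)
          - X 1 * g4 (n - 3) * X 2 * g4 (n - 4)) * h2
    refine ⟨hA, ?_⟩
    by_cases h : n < 0
    · rw [g4_neg (show 2 * n + 1 < 0 by omega), g4_neg (show n - 1 < 0 by omega)]
      simp
    · rw [g4_pos (show 0 < 2 * n + 1 by omega), show 2 * n + 1 - 2 = 2 * n - 1 by ring,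
        show 2 * n + 1 - 3 = 2 * n - 2 by ring, show 2 * n + 1 - 4 = 2 * n - 3 by ring,
        e1.1, e1.2, e2.2]
      linear_combination (X 0 * X 1 * g4 (n - 2) ^ 2 + X 1 * X 2 * g4 (n - 3) ^ 2) * h2

theorem g4_even (n : ℤ) :
    g4 (2 * n) = g4 n ^ 2 + X 0 * g4 (n - 1) ^ 2 + X 2 * g4 (n - 2) ^ 2 :=
  (g4_dbl (n.toNat + 1) n (by push_cast; omega)).1

theorem g4_odd (n : ℤ) : g4 (2 * n + 1) = X 1 * g4 (n - 1) ^ 2 :=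
  (g4_dbl (n.toNat + 1) n (by push_cast; omega)).2

/-- the triple (g_{2^t-2}, g_{2^t-1}, g_{2^t}) with t = k+2 -/
noncomputable def T : ℕ → R × R × R
  | 0 => (X 0, X 1, X 0 ^ 2 + X 2)
  | k + 1 => ((T k).2.1 ^ 2 + X 0 * (T k).1 ^ 2, X 1 * (T k).1 ^ 2,
      (T k).2.2 ^ 2 + X 0 * (T k).2.1 ^ 2 + X 2 * (T k).1 ^ 2)

noncomputable def A (k : ℕ) : R := (T k).1
noncomputable def B (k : ℕ) : R := (T k).2.1
noncomputable def C (k : ℕ) : R := (T k).2.2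

theorem A0 : A 0 = X 0 := rfl
theorem B0 : B 0 = X 1 := rfl
theorem C0 : C 0 = X 0 ^ 2 + X 2 := rfl
theorem As (k : ℕ) : A (k + 1) = B k ^ 2 + X 0 * A k ^ 2 := rfl
theorem Bs (k : ℕ) : B (k + 1) = X 1 * A k ^ 2 := rfl
theorem Cs (k : ℕ) : C (k + 1) = C k ^ 2 + X 0 * B k ^ 2 + X 2 * A k ^ 2 := rfl

theorem g4_T (k : ℕ) : g4 (2 ^ (k + 2) - 3) = 0 ∧ g4 (2 ^ (k + 2) - 2) = A k ∧
    g4 (2 ^ (k + 2) - 1) = B k ∧ g4 (2 ^ (k + 2)) = C k := by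
  induction k with
  | zero =>
    have h1 : g4 1 = 0 := by rw [g4_pos (by norm_num)]; simp [g4_neg]
    have h2 : g4 2 = X 0 := by rw [g4_pos (by norm_num)]; simp [g4_neg, g4_zero]
    have h3 : g4 3 = X 1 := by rw [g4_pos (by norm_num)]; simp [g4_neg, g4_zero, h1]
    have h4 : g4 4 = X 0 ^ 2 + X 2 := by
      rw [g4_pos (by norm_num)]; norm_num [g4_zero, h1, h2]; ring
    norm_num [h1, h2, h3, h4, A0, B0, C0]
  | succ k ih =>
    obtain ⟨i0, i1, i2, i3⟩ := ih
    have e : (2 : ℤ) ^ (k + 1 + 2) = 2 * 2 ^ (k + 2) := by ring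
    rw [e]
    generalize (2 : ℤ) ^ (k + 2) = q at *
    refine ⟨?_, ?_, ?_, ?_⟩
    · rw [show 2 * q - 3 = 2 * (q - 2) + 1 by ring, g4_odd,
        show q - 2 - 1 = q - 3 by ring, i0]; simp
    · rw [show 2 * q - 2 = 2 * (q - 1) by ring, g4_even,
        show q - 1 - 1 = q - 2 by ring, show q - 1 - 2 = q - 3 by ring, i0, i1, i2, As]; simp
    · rw [show 2 * q - 1 = 2 * (q - 1) + 1 by ring, g4_odd,
        show q - 1 - 1 = q - 2 by ring, i1, Bs]
    · rw [g4_even, i1, i2, i3, Cs]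

theorem mem_I4 (k : ℕ) (f : R) :
    f ∈ I4 (2 ^ (k + 2)) ↔ ∃ x y z, f = x * A k + y * B k + z * C k := by
  obtain ⟨i0, i1, i2, i3⟩ := g4_T k
  rw [I4, i0, i1, i2, i3, Ideal.span_insert_zero]
  simp only [Ideal.mem_span_insert, Ideal.mem_span_singleton']
  constructor
  · rintro ⟨x, _, ⟨y, _, ⟨z, rfl⟩, rfl⟩, rfl⟩
    exact ⟨x, y, z, by ring⟩
  · rintro ⟨x, y, z, rfl⟩
    exact ⟨x, _, ⟨y, _, ⟨z, rfl⟩, rfl⟩, by ring⟩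

theorem rec2 (k : ℕ) :
    A (k + 2) = X 0 ^ 2 ^ (k + 2) * A (k + 1) + X 1 ^ 2 ^ (k + 2) * A k ∧
    B (k + 2) = X 0 ^ 2 ^ (k + 2) * B (k + 1) + X 1 ^ 2 ^ (k + 2) * B k ∧
    C (k + 2) = X 0 ^ 2 ^ (k + 2) * C (k + 1) + X 1 ^ 2 ^ (k + 2) * C k + X 2 ^ 2 ^ (k + 2) := by
  have h2 := two_zero
  have sq : ∀ a b : R, (a + b) ^ 2 = a ^ 2 + b ^ 2 := fun a b => by
    linear_combination a * b * h2
  induction k with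
  | zero =>
    simp only [As, Bs, Cs, A0, B0, C0, sq, mul_pow, zero_add]
    refine ⟨?_, ?_, ?_⟩
    · ring_nf
      try grind
    · ring_nf
      try grind
    · ring_nf
      try grind
  | succ k ih =>
    obtain ⟨i0, i1, i2⟩ := ih
    have e : 2 ^ (k + 1 + 2) = 2 ^ (k + 2) * 2 := by ring
    rw [e, As (k + 2), Bs (k + 2), Cs (k + 2)]
    have a := As (k + 1)
    have b := Bs (k + 1)
    have c := Cs (k + 1)
    rw [show k + 1 + 1 = k + 2 by ring] at *
    simp only [pow_mul]
    generalize (X 0 : R) ^ 2 ^ (k + 2) = p at *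
    generalize (X 1 : R) ^ 2 ^ (k + 2) = q at *
    generalize (X 2 : R) ^ 2 ^ (k + 2) = r at *
    refine ⟨?_, ?_, ?_⟩
    · have a' := As k
      have j0 := congrArg (· ^ 2) i0
      have j1 := congrArg (· ^ 2) i1
      simp only [sq, mul_pow] at j0 j1
      linear_combination j1 + X 0 * j0 - p ^ 2 * a - q ^ 2 * a'
    · have b' := Bs k
      have j0 := congrArg (· ^ 2) i0
      simp only [sq, mul_pow] at j0
      linear_combination X 1 * j0 - p ^ 2 * b - q ^ 2 * b'
    · have c' := Cs k
      have j0 := congrArg (· ^ 2) i0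
      have j1 := congrArg (· ^ 2) i1
      have j2 := congrArg (· ^ 2) i2
      simp only [sq, mul_pow] at j0 j1 j2
      linear_combination j2 + X 0 * j1 + X 2 * j0 - p ^ 2 * c - q ^ 2 * c'

theorem w3_mem (k : ℕ) : ∃ x y z, (X 1 : R) ^ (2 ^ (k + 1) - 1) = x * A k + y * B k + z * C k := by
  have h2 := two_zero
  induction k with
  | zero => exact ⟨0, 1, 0, by simp [B0]⟩
  | succ k ih =>
    obtain ⟨x, y, z, h⟩ := ih
    have e : 2 ^ (k + 1 + 1) - 1 = (2 ^ (k + 1) - 1) * 2 + 1 := by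
      have := Nat.one_le_two_pow (n := k + 1)
      rw [pow_succ 2 (k + 1)]; omega
    refine ⟨y ^ 2 * X 1 + z ^ 2 * X 0 * X 1, x ^ 2 + y ^ 2 * X 0 + z ^ 2 * (X 0 ^ 2 + X 2),
      z ^ 2 * X 1, ?_⟩
    rw [e, pow_succ, pow_mul, h, As, Bs, Cs]
    linear_combination (X 1 * (x * y * A k * B k + x * z * A k * C k + y * z * B k * C k)
      - y ^ 2 * X 0 * X 1 * A k ^ 2 - z ^ 2 * X 0 * X 1 * B k ^ 2
      - z ^ 2 * X 0 ^ 2 * X 1 * A k ^ 2 - z ^ 2 * X 2 * X 1 * A k ^ 2) * h2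

theorem upper (k : ℕ) :
    ∃ x y z, (X 2 : R) ^ (2 ^ (k + 2)) = x * A (k + 1) + y * B (k + 1) + z * C (k + 1) := by
  have h2 := two_zero
  obtain ⟨x, y, z, h⟩ := w3_mem (k + 1)
  have e : 2 ^ (k + 2) = (2 ^ (k + 1 + 1) - 1) + 1 := by
    have := Nat.one_le_two_pow (n := k + 2)
    rw [show k + 1 + 1 = k + 2 by ring]
    exact (Nat.sub_add_cancel this).symm
  have h' : (X 1 : R) ^ 2 ^ (k + 2) = X 1 * (x * A (k + 1) + y * B (k + 1) + z * C (k + 1)) := by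
    rw [e, pow_succ, h]; ring
  have r := (rec2 k).2.2
  rw [Cs (k + 1), h'] at r
  refine ⟨X 2 * A (k + 1) - X 1 * x * C k, X 0 * B (k + 1) - X 1 * y * C k,
    C (k + 1) - X 1 * z * C k - X 0 ^ 2 ^ (k + 2), ?_⟩
  linear_combination -r

noncomputable def φ : R →ₐ[ZMod 2] R := aeval ![X 0, 0, X 2]

theorem φ0 : φ (X 0) = X 0 := by simp [φ]
theorem φ1 : φ (X 1) = 0 := by simp [φ]
theorem φ2 : φ (X 2) = X 2 := by simp [φ]

theorem φ_dvd (p : R) : X 1 ∣ p - φ p := by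
  induction p using MvPolynomial.induction_on with
  | C a => simp [φ]
  | add p q hp hq =>
    rw [map_add, add_sub_add_comm]; exact dvd_add hp hq
  | mul_X p i hp =>
    have : X 1 ∣ (X i : R) - φ (X i) := by
      fin_cases i
      · simp [φ]
      · simp [φ]
      · simp [φ]
    rw [map_mul, show p * X i - φ p * φ (X i) = (p - φ p) * X i + φ p * (X i - φ (X i)) by ring]
    exact dvd_add (Dvd.dvd.mul_right hp _) (Dvd.dvd.mul_left this _)

theorem φB (k : ℕ) : φ (B k) = 0 := by
  cases k with
  | zero => rw [B0, φ1]
  | succ k => rw [Bs, map_mul, φ1, zero_mul]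

theorem φA (k : ℕ) : ∃ n, φ (A k) = X 0 ^ n := by
  induction k with
  | zero => exact ⟨1, by rw [A0, φ0, pow_one]⟩
  | succ k ih =>
    obtain ⟨n, h⟩ := ih
    exact ⟨n * 2 + 1, by rw [As, map_add, map_mul, map_pow, map_pow, φB, h, φ0]; ring⟩

noncomputable def ψ : R →ₐ[ZMod 2] R := aeval ![0, 0, X 2]

theorem ψφ (p : R) : ψ (φ p) = ψ p := by
  have : ψ.comp φ = ψ := by
    apply MvPolynomial.algHom_ext
    intro i
    fin_cases i <;> simp [ψ, φ]
  exact DFunLike.congr_fun this p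

theorem ψA (k : ℕ) : ψ (A k) = 0 ∧ ψ (B k) = 0 ∧ ψ (C k) ≠ 0 := by
  have p0 : ψ (X 0) = 0 := by simp [ψ]
  have p1 : ψ (X 1) = 0 := by simp [ψ]
  have p2 : ψ (X 2) = X 2 := by simp [ψ]
  induction k with
  | zero => simp [A0, B0, C0, p0, p1, p2]
  | succ k ih =>
    obtain ⟨a, b, c⟩ := ih
    simp [As, Bs, Cs, p0, p1, p2, a, b, c]

theorem X0_not_dvd (k : ℕ) : ¬ (X 0 : R) ∣ φ (C k) := by
  rintro ⟨q, hq⟩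
  have := congrArg ψ hq
  rw [ψφ, map_mul] at this
  apply (ψA k).2.2
  rw [this]; simp [ψ]

theorem inj (k : ℕ) (f x y z : R)
    (h : X 1 * f = x * A (k + 1) + y * B (k + 1) + z * C (k + 1)) :
    ∃ x y z, f = x * A k ^ 2 + y * B k ^ 2 + z * C k ^ 2 := by
  have h2 := two_zero
  obtain ⟨n, hn⟩ := φA (k + 1)
  have e := congrArg φ h
  simp only [map_mul, map_add, φ1, φB, hn, zero_mul, mul_zero, add_zero] at e
  have e' : φ z * φ (C (k + 1)) = X 0 ^ n * φ x := by
    linear_combination -e - φ x * X 0 ^ n * h2 + 0 * h2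
  have hp : Prime (X 0 : R) := MvPolynomial.X_prime
  have hd : (X 0 : R) ^ n ∣ φ z :=
    hp.pow_dvd_of_dvd_mul_right n (X0_not_dvd (k + 1)) ⟨_, e'⟩
  obtain ⟨d, hd⟩ := hd
  have hx : φ x = d * φ (C (k + 1)) := by
    apply mul_left_cancel₀ (pow_ne_zero n hp.ne_zero)
    rw [← e', hd]; ring
  obtain ⟨x1, hx1⟩ := φ_dvd x
  obtain ⟨z1, hz1⟩ := φ_dvd z
  obtain ⟨c1, hc1⟩ := φ_dvd (C (k + 1))
  obtain ⟨a1, ha1⟩ := φ_dvd (A (k + 1))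
  rw [hn] at ha1
  have key : f = (x1 - d * c1) * A (k + 1) + y * A k ^ 2 + (z1 - d * a1) * C (k + 1) := by
    apply mul_left_cancel₀ (MvPolynomial.X_ne_zero (R := ZMod 2) (1 : Fin 3))
    rw [h, Bs]
    linear_combination A (k + 1) * hx1 + A (k + 1) * hx - d * A (k + 1) * hc1 + C (k + 1) * hz1
      + C (k + 1) * hd - d * C (k + 1) * ha1 + d * A (k + 1) * C (k + 1) * h2
  refine ⟨(x1 - d * c1) * X 0 + y + (z1 - d * a1) * X 2, (x1 - d * c1) + (z1 - d * a1) * X 0,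
    z1 - d * a1, ?_⟩
  rw [key, As, Cs]; ring

noncomputable def em (m : Fin 3 →₀ ℕ) : Fin 3 →₀ ℕ := 2 • m + Finsupp.equivFunOnFinite.symm (fun _ => 1)

theorem em_inj : Function.Injective em := by
  intro a b h
  ext i
  have := DFunLike.congr_fun h i
  simp [em] at this
  exact this

/-- the Cartier-type operator -/
theorem exists_cartier : ∃ F : R →+ R, (∀ a h, F (h * a ^ 2) = F h * a) ∧
    F (X 0 * X 1 * X 2) = 1 := by
  classical
  let F : R →+ R :=
    { toFun := fun h => AddMonoidAlgebra.comapDomain em em_inj h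
      map_zero' := AddMonoidAlgebra.comapDomain_zero em em_inj
      map_add' := AddMonoidAlgebra.comapDomain_add em em_inj }
  have hc : ∀ h n, coeff n (F h) = coeff (em n) h := fun h n => rfl
  have h2 := two_zero
  refine ⟨F, ?_, ?_⟩
  · intro a h
    induction a using MvPolynomial.induction_on' with
    | add p q hp hq =>
      rw [show h * (p + q) ^ 2 = h * p ^ 2 + h * q ^ 2 by linear_combination h * p * q * h2,
        map_add, hp, hq, mul_add]
    | monomial m c =>
      ext n
      rw [hc, MvPolynomial.monomial_pow, coeff_mul_monomial', coeff_mul_monomial', hc]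
      have hcc : c ^ 2 = c := by revert c; decide
      have hle : 2 • m ≤ em n ↔ m ≤ n := by
        simp only [Finsupp.le_def]
        refine forall_congr' fun i => ?_
        simp [em]; omega
      by_cases hmn : m ≤ n
      · rw [if_pos (hle.2 hmn), if_pos hmn, hcc]
        congr 2
        ext i
        have := hmn i
        simp [em]; omega
      · rw [if_neg (fun hh => hmn (hle.1 hh)), if_neg hmn]
  · have : (X 0 * X 1 * X 2 : R) = monomial (em 0) 1 := by
      simp only [X, monomial_mul, mul_one]
      have hs : Finsupp.single (0 : Fin 3) 1 + Finsupp.single 1 1 + Finsupp.single 2 1 = em 0 := by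
        ext i
        fin_cases i <;> simp [em]
      rw [hs]
    ext n
    rw [hc, this, coeff_monomial, coeff_one]
    simp only [em_inj.eq_iff]

theorem descend (a b c s : R)
    (h : ∃ x y z, X 0 * X 1 * X 2 * s ^ 2 = x * a ^ 2 + y * b ^ 2 + z * c ^ 2) :
    ∃ x y z, s = x * a + y * b + z * c := by
  obtain ⟨F, hF, h1⟩ := exists_cartier
  obtain ⟨x, y, z, h⟩ := h
  refine ⟨F x, F y, F z, ?_⟩
  rw [← hF, ← hF, ← hF, ← map_add, ← map_add, ← h, hF, h1, one_mul]

theorem step (k : ℕ) (s : R)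
    (h : ∃ x y z, X 1 * (X 0 * X 1 * X 2 * s ^ 2) = x * A (k + 1) + y * B (k + 1) + z * C (k + 1)) :
    ∃ x y z, s = x * A k + y * B k + z * C k := by
  obtain ⟨x, y, z, h⟩ := h
  exact descend _ _ _ _ (inj k _ x y z h)

theorem lower (k : ℕ) : ∃ m : R, ¬ ∃ x y z,
    X 2 ^ (2 ^ (k + 2) - 1) * m = x * A (k + 1) + y * B (k + 1) + z * C (k + 1) := by
  have h2 := two_zero
  induction k with
  | zero =>
    refine ⟨1, ?_⟩
    rintro ⟨x, y, z, h⟩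
    have := step 0 1 ⟨x + X 0 ^ 3, y, z + X 2 + X 0 ^ 2, by
      norm_num at h
      rw [show (1 : ℕ) = 0 + 1 by rfl] at h
      simp only [As, Bs, Cs, A0, B0, C0] at h ⊢
      linear_combination h - (X 2 ^ 3 + 2 * X 0 ^ 4 * X 2 + 2 * X 0 ^ 2 * X 2 ^ 2 + X 0 ^ 6
        + X 0 ^ 3 * X 1 ^ 2) * h2⟩
    obtain ⟨x, y, z, h⟩ := this
    have := congrArg (aeval (R := ZMod 2) (fun _ : Fin 3 => (0 : ZMod 2))) h
    simp [A0, B0, C0] at this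
  | succ k ih =>
    obtain ⟨m, hm⟩ := ih
    refine ⟨X 0 * X 1 ^ 2 * m ^ 2, ?_⟩
    rintro ⟨x, y, z, h⟩
    apply hm
    apply step
    refine ⟨x, y, z, ?_⟩
    rw [← h]
    have e : 2 ^ (k + 1 + 2) - 1 = (2 ^ (k + 2) - 1) * 2 + 1 := by
      have := Nat.one_le_two_pow (n := k + 2)
      rw [show k + 1 + 2 = k + 2 + 1 by ring, pow_succ 2 (k + 2)]; omega
    rw [e]; ring

end Stmt8

/-- Proposition 3.5: for every `t ≥ 3`, `w_4^{2^{t-1}} ∈ I_{2^t,4}` and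
`w_4^{2^{t-1}-1} ∉ I_{2^t,4}`, i.e. the image of `w_4` in `F_2[w_2,w_3,w_4]/I_{2^t,4}`
has height exactly `2^{t-1} - 1`. -/
theorem stmt8 (t : ℕ) (ht : 3 ≤ t) :
    (X 2 : MvPolynomial (Fin 3) (ZMod 2)) ^ 2 ^ (t - 1) ∈ I4 (2 ^ t) ∧
      (X 2 : MvPolynomial (Fin 3) (ZMod 2)) ^ (2 ^ (t - 1) - 1) ∉ I4 (2 ^ t) := by
  obtain ⟨k, rfl⟩ : ∃ k, t = k + 3 := ⟨t - 3, by omega⟩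
  rw [show k + 3 - 1 = k + 2 by omega, show k + 3 = (k + 1) + 2 by omega,
    Stmt8.mem_I4, Stmt8.mem_I4]
  refine ⟨Stmt8.upper k, ?_⟩
  rintro ⟨x, y, z, h⟩
  obtain ⟨m, hm⟩ := Stmt8.lower k
  exact hm ⟨m * x, m * y, m * z, by rw [h]; ring⟩
end
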